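/- For every real number q with 0 < q < 1, the function q ↦ (1/4)·(1 + k(q)^2)/(1 − k(q)^2) is differentiable at q with derivative equal to q · E(q)^3 E(q^{10})^8 / E(q^5)^7. -/

import Mathlib

open Real

/-- Euler's product `E(q) = ∏_{j=1}^∞ (1 - q^j)`. -/
noncomputable def eulerE (q : ℝ) : ℝ := ∏' j : ℕ, (1 - q ^ (j + 1))

/-- Ramanujan's level-10 function `k(q)`. -/
noncomputable def ramK (q : ℝ) : ℝ :=
  q * ∏' j : ℕ,
    ((1 - q ^ (10 * j + 1)) * (1 - q ^ (10 * j + 2)) * (1 - q ^ (10 * j + 8)) *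
        (1 - q ^ (10 * j + 9))) /
      ((1 - q ^ (10 * j + 3)) * (1 - q ^ (10 * j + 4)) * (1 - q ^ (10 * j + 6)) *
        (1 - q ^ (10 * j + 7)))

open Filter Topology

noncomputable def Po (q x : ℂ) : ℂ := ∏' n : ℕ, (1 - x * q ^ n)

lemma Po_summable {q : ℂ} (hq : ‖q‖ < 1) (x : ℂ) : Summable fun n : ℕ => ‖-(x * q ^ n)‖ := by
  simp only [norm_neg, norm_mul, norm_pow]
  exact (summable_geometric_of_lt_one (norm_nonneg _) hq).mul_left _

lemma Po_mult {q : ℂ} (hq : ‖q‖ < 1) (x : ℂ) : Multipliable fun n : ℕ => (1 - x * q ^ n) := by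
  simpa [sub_eq_add_neg] using multipliable_one_add_of_summable (Po_summable hq x)

lemma Po_hasProd {q : ℂ} (hq : ‖q‖ < 1) (x : ℂ) :
    HasProd (fun n : ℕ => (1 - x * q ^ n)) (Po q x) := (Po_mult hq x).hasProd

lemma Po_ne {q : ℂ} (hq : ‖q‖ < 1) {x : ℂ} (h : ∀ n : ℕ, 1 - x * q ^ n ≠ 0) : Po q x ≠ 0 := by
  have := tprod_one_add_ne_zero_of_summable (f := fun n : ℕ => -(x * q ^ n))
    (by simpa [sub_eq_add_neg] using h) (Po_summable hq x)
  simpa [Po, sub_eq_add_neg] using this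

lemma Po_ne' {q : ℂ} (hq : ‖q‖ < 1) {x : ℂ} (h : ‖x‖ < 1) : Po q x ≠ 0 := by
  apply Po_ne hq
  intro n h0
  have h1 : x * q ^ n = 1 := (sub_eq_zero.mp h0).symm
  have h2 : ‖x * q ^ n‖ = 1 := by rw [h1]; simp
  rw [norm_mul, norm_pow] at h2
  have : ‖q‖ ^ n ≤ 1 := pow_le_one₀ (norm_nonneg _) hq.le
  nlinarith [norm_nonneg x]

lemma Po_succ {q : ℂ} (hq : ‖q‖ < 1) (x : ℂ) : Po q x = (1 - x) * Po q (x * q) := by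
  have h := (Po_hasProd hq (x * q))
  have h2 : HasProd (fun n : ℕ => (1 - x * q ^ (n + 1))) (Po q (x * q)) := by
    convert h using 2 with n
    ring
  have h3 := h2.zero_mul (f := fun n : ℕ => (1 - x * q ^ n))
  simpa using (Po_hasProd hq x).unique h3

lemma group_prod {f : ℕ → ℂ} {a : ℂ} (m : ℕ) [NeZero m] (h : HasProd f a) :
    HasProd (fun j => ∏ i : Fin m, f (m * j + i)) a := by
  have h1 := (Nat.divModEquiv m).symm.hasProd_iff.mpr h
  refine h1.prod_fiberwise (g := fun j => ∏ i : Fin m, f (m * j + i)) ?_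
  intro b
  convert hasProd_fintype (fun c : Fin m => f (m * b + c)) using 2 with c
  simp [Nat.divModEquiv]
  ring_nf

lemma group_sum {f : ℕ → ℝ} {a : ℝ} (m : ℕ) [NeZero m] (h : HasSum f a) :
    HasSum (fun j => ∑ i : Fin m, f (m * j + i)) a := by
  have h1 := (Nat.divModEquiv m).symm.hasSum_iff.mpr h
  refine h1.prod_fiberwise (g := fun j => ∑ i : Fin m, f (m * j + i)) ?_
  intro b
  convert hasSum_fintype (fun c : Fin m => f (m * b + c)) using 2 with c
  simp [Nat.divModEquiv]
  ring_nf

lemma Po_group {q : ℂ} (hq : ‖q‖ < 1) (x : ℂ) (m : ℕ) [NeZero m] :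
    Po q x = ∏ i : Fin m, Po (q ^ m) (x * q ^ (i : ℕ)) := by
  have h := group_prod m (Po_hasProd hq x)
  have hq' : ‖q ^ m‖ < 1 := by
    rw [norm_pow]; exact pow_lt_one₀ (norm_nonneg _) hq (NeZero.ne m)
  have h2 : HasProd (fun j => ∏ i : Fin m, (1 - x * q ^ (i : ℕ) * (q ^ m) ^ j))
      (∏ i : Fin m, Po (q ^ m) (x * q ^ (i : ℕ))) :=
    hasProd_prod fun i _ => Po_hasProd hq' _
  refine h.unique ?_
  convert h2 using 4 with j i
  rw [pow_add, pow_mul]; ring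

lemma deriv_prod {b : ℕ → ℂ} (hb : Summable fun n => ‖b n‖) :
    HasDerivAt (fun w : ℂ => ∏' n, (1 - w * b n)) (-∑' n, b n) 0 := by
  have hml : HasProdLocallyUniformlyOn (fun (n : ℕ) (w : ℂ) => 1 + (-(w * b n)))
      (fun w => ∏' n, (1 + (-(w * b n)))) (Metric.ball (0:ℂ) 1) := by
    refine Summable.hasProdLocallyUniformlyOn_nat_one_add Metric.isOpen_ball hb ?_ ?_
    · refine Filter.Eventually.of_forall fun n w hw => ?_
      rw [Metric.mem_ball, dist_zero_right] at hw
      rw [norm_neg, norm_mul]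
      nlinarith [norm_nonneg (b n)]
    · intro n; fun_prop
  simp only [← sub_eq_add_neg] at hml
  have h0 : (0:ℂ) ∈ Metric.ball (0:ℂ) 1 := by simp
  have hlog : ∀ n, logDeriv (fun w : ℂ => 1 - w * b n) 0 = - b n := by
    intro n
    simp [logDeriv_apply]
  have hd : DifferentiableOn ℂ (fun w : ℂ => ∏' n, (1 - w * b n)) (Metric.ball (0:ℂ) 1) := by
    refine TendstoLocallyUniformlyOn.differentiableOn
      (hasProdLocallyUniformlyOn_iff_tendstoLocallyUniformlyOn.mp hml)
      (Filter.Eventually.of_forall fun s => ?_) Metric.isOpen_ball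
    fun_prop
  have hdd := (hd 0 h0).differentiableAt (Metric.isOpen_ball.mem_nhds h0)
  have key := logDeriv_tprod_eq_tsum (s := Metric.ball (0:ℂ) 1) Metric.isOpen_ball h0
    (f := fun (n : ℕ) (w : ℂ) => 1 - w * b n) (by simp) (fun i => by fun_prop)
    (by simp only [hlog]; exact hb.of_norm.neg) hml.multipliableLocallyUniformlyOn (by simp)
  simp only [hlog, tsum_neg] at key
  have := hdd.hasDerivAt
  rw [logDeriv_apply] at key
  simp at key
  rwa [key] at this

noncomputable def ee (q : ℂ) (j : ℤ) : ℂ := q ^ (j * (j - 1) / 2)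

lemma ee_succ {q : ℂ} (hq : q ≠ 0) (j : ℤ) : ee q (j + 1) = ee q j * q ^ j := by
  unfold ee
  rw [← zpow_add₀ hq]
  congr 1
  rw [show (j + 1) * (j + 1 - 1) = j * (j - 1) + j * 2 by ring]
  rw [Int.add_mul_ediv_right _ _ (by norm_num)]

lemma ee_ne {q : ℂ} (hq : q ≠ 0) (j : ℤ) : ee q j ≠ 0 := zpow_ne_zero _ hq

lemma ee_summable {q x : ℂ} (hq0 : q ≠ 0) (hq : ‖q‖ < 1) (hx : x ≠ 0) :
    Summable fun j : ℤ => ‖ee q j * x ^ j‖ := by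
  have hlim : Tendsto (fun n : ℕ => ‖q‖ ^ n) atTop (𝓝 0) :=
    tendsto_pow_atTop_nhds_zero_of_lt_one (norm_nonneg _) hq
  have hne : ∀ j : ℤ, ‖ee q j * x ^ j‖ ≠ 0 := fun j =>
    norm_ne_zero_iff.mpr (mul_ne_zero (ee_ne hq0 j) (zpow_ne_zero _ hx))
  have hxn : ‖x‖ ≠ 0 := norm_ne_zero_iff.mpr hx
  have hqn : ‖q‖ ≠ 0 := norm_ne_zero_iff.mpr hq0
  refine Summable.of_nat_of_neg ?_ ?_
  · refine summable_of_ratio_test_tendsto_lt_one (l := 0) (by norm_num)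
      (Filter.Eventually.of_forall fun n => hne n) ?_
    have := hlim.mul_const ‖x‖
    rw [zero_mul] at this
    refine this.congr fun n => ?_
    have h1 : ee q ((n + 1 : ℕ) : ℤ) * x ^ ((n + 1 : ℕ) : ℤ) = ee q n * x ^ (n:ℤ) * (q ^ n * x) := by
      push_cast
      rw [ee_succ hq0, zpow_add₀ hx]
      simp; ring
    rw [h1, norm_mul (ee q n * x ^ (n:ℤ))]
    have := hne (n:ℤ)
    simp only [norm_mul, norm_norm, norm_pow] at this ⊢
    rw [mul_comm (_ * _) (_ * _), mul_div_assoc, div_self this, mul_one]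
  · refine summable_of_ratio_test_tendsto_lt_one (l := 0) (by norm_num)
      (Filter.Eventually.of_forall fun n => hne _) ?_
    have := (hlim.mul_const (‖q‖ * ‖x‖⁻¹))
    rw [zero_mul] at this
    refine this.congr fun n => ?_
    have h1 : ee q (-((n + 1 : ℕ) : ℤ)) * x ^ (-((n + 1 : ℕ) : ℤ)) =
        ee q (-(n:ℤ)) * x ^ (-(n:ℤ)) * (q ^ n * (q * x⁻¹)) := by
      have h2 := ee_succ hq0 (-((n + 1 : ℕ) : ℤ))
      have h3 : -((n + 1 : ℕ) : ℤ) + 1 = -(n:ℤ) := by push_cast; ring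
      rw [h3] at h2
      rw [h2, zpow_neg, zpow_neg, zpow_neg, zpow_natCast, zpow_natCast, zpow_natCast]
      field_simp
      ring
    rw [h1, norm_mul (ee q (-(n:ℤ)) * x ^ (-(n:ℤ)))]
    have := hne (-(n:ℤ))
    simp only [norm_mul, norm_norm, norm_pow, norm_inv] at this ⊢
    rw [mul_comm (_ * _) (_ * (_ * _)), mul_div_assoc, div_self this, mul_one]

/-- finite `q`-factorial -/
noncomputable def qf (q : ℂ) (n : ℕ) : ℂ := ∏ i ∈ Finset.range n, (1 - q * q ^ i)

lemma qf_ne {q : ℂ} (hq : ‖q‖ < 1) (n : ℕ) : qf q n ≠ 0 := by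
  refine Finset.prod_ne_zero_iff.mpr fun i _ h0 => ?_
  have h1 : q * q ^ i = 1 := (sub_eq_zero.mp h0).symm
  have h2 : ‖q ^ (i+1)‖ = 1 := by rw [pow_succ', h1]; simp
  rw [norm_pow] at h2
  have : ‖q‖ ^ (i+1) < 1 := pow_lt_one₀ (norm_nonneg _) hq (by omega)
  linarith

noncomputable def rr (q : ℂ) (m : ℤ) : ℂ := if m < 0 then 0 else (qf q m.toNat)⁻¹

lemma rr_pred {q : ℂ} (hq : ‖q‖ < 1) (m : ℤ) : rr q (m - 1) = (1 - q ^ m) * rr q m := by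
  rcases lt_trichotomy m 0 with h | h | h
  · simp [rr, h, show m - 1 < 0 by omega]
  · subst h; simp [rr]
  · obtain ⟨n, rfl⟩ : ∃ n : ℕ, m = n + 1 := ⟨(m-1).toNat, by omega⟩
    have h1 := qf_ne hq n
    have h2 := qf_ne hq (n+1)
    have h3 : qf q (n+1) = qf q n * (1 - q * q ^ n) := Finset.prod_range_succ _ _
    have h4 : ((n:ℤ) + 1).toNat = n + 1 := by omega
    rw [rr, rr, if_neg (by omega), if_neg (by omega), h4]
    simp only [add_sub_cancel_right, Int.toNat_natCast]
    rw [h3] at h2 ⊢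
    have h5 := right_ne_zero_of_mul h2
    have h6 : q ^ ((n:ℤ) + 1) = q * q ^ n := by
      rw [← pow_succ']; exact_mod_cast zpow_natCast q (n+1)
    rw [h6]
    field_simp

noncomputable def cc (q : ℂ) (n : ℕ) (j : ℤ) : ℂ :=
  qf q (2 * n) * rr q (n - j) * rr q (n + j)

lemma cc_rec {q : ℂ} (hq0 : q ≠ 0) (hq : ‖q‖ < 1) (n : ℕ) (j : ℤ) :
    cc q (n + 1) j = (1 + q ^ (2 * n + 1)) * cc q n j + q ^ ((n:ℤ) + 1 - j) * cc q n (j - 1)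
      + q ^ ((n:ℤ) + 1 + j) * cc q n (j + 1) := by
  unfold cc
  have e1 : rr q (n - j) = (1 - q ^ ((n:ℤ) + 1 - j)) * rr q ((n:ℤ) + 1 - j) := by
    rw [← rr_pred hq]; congr 1; ring
  have e2 : rr q (n + j) = (1 - q ^ ((n:ℤ) + 1 + j)) * rr q ((n:ℤ) + 1 + j) := by
    rw [← rr_pred hq]; congr 1; ring
  have e3 : rr q (n - (j+1)) = (1 - q ^ ((n:ℤ) - j)) * rr q (n - j) := by
    rw [← rr_pred hq]; congr 1; ring
  have e4 : rr q (n + (j-1)) = (1 - q ^ ((n:ℤ) + j)) * rr q (n + j) := by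
    rw [← rr_pred hq]; congr 1; ring
  have e5 : (n:ℤ) - (j - 1) = n + 1 - j := by ring
  have e6 : (n:ℤ) + (j + 1) = n + 1 + j := by ring
  have e7 : q ^ ((n:ℤ) + 1 - j) = q * q ^ ((n:ℤ) - j) := by
    rw [← zpow_one_add₀ hq0]; congr 1; ring
  have e8 : q ^ ((n:ℤ) + 1 + j) = q * q ^ ((n:ℤ) + j) := by
    rw [← zpow_one_add₀ hq0]; congr 1; ring
  have e9 : q ^ (2 * n) = q ^ ((n:ℤ) - j) * q ^ ((n:ℤ) + j) := by
    rw [← zpow_add₀ hq0, ← zpow_natCast]; congr 1; push_cast; ring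
  have e10 : qf q (2 * (n + 1)) = qf q (2 * n) * (1 - q * q ^ (2*n)) * (1 - q * (q ^ (2*n) * q)) := by
    rw [show 2 * (n + 1) = 2 * n + 1 + 1 by ring]
    rw [qf, Finset.prod_range_succ, Finset.prod_range_succ, ← qf, pow_succ]
  rw [e3, e4, e1, e2, e5, e6, e10]
  push_cast
  rw [pow_succ, e9, e7, e8]
  ring

lemma finite_jtp {q x : ℂ} (hq0 : q ≠ 0) (hq : ‖q‖ < 1) (hx : x ≠ 0) (n : ℕ) :
    HasSum (fun j : ℤ => cc q n j * ((-1) ^ j * (ee q j * x ^ j)))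
      (∏ i ∈ Finset.range n, ((1 - x * q ^ i) * (1 - q / x * q ^ i))) := by
  induction n with
  | zero =>
    have : ∀ j : ℤ, j ≠ 0 → cc q 0 j * ((-1) ^ j * (ee q j * x ^ j)) = 0 := by
      intro j hj
      rcases lt_or_gt_of_ne hj with h | h <;> simp [cc, rr, h]
    convert hasSum_single (0:ℤ) this using 1
    simp [cc, rr, qf, ee]
  | succ n ih =>
    rw [Finset.prod_range_succ]
    have h1 := ih.mul_left (1 + q ^ (2 * n + 1))
    have h2 := ((Equiv.subRight (1:ℤ)).hasSum_iff.mpr ih).mul_left (- (x * q ^ n))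
    have h3 := ((Equiv.addRight (1:ℤ)).hasSum_iff.mpr ih).mul_left (- (q ^ (n + 1) / x))
    have h4 := (h1.add h2).add h3
    generalize (∏ i ∈ Finset.range n, ((1 - x * q ^ i) * (1 - q / x * q ^ i))) = P at h4 ⊢
    have hv : P * ((1 - x * q ^ n) * (1 - q / x * q ^ n)) = (1 + q ^ (2 * n + 1)) * P
        + -(x * q ^ n) * P + -(q ^ (n + 1) / x) * P := by
      field_simp
      ring
    rw [hv]
    refine Eq.mpr (congrArg (fun f : ℤ → ℂ => HasSum f _) (funext fun j => ?_)) h4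
    · show _ = _
      simp only [Function.comp, Equiv.subRight_apply, Equiv.coe_addRight]
      rw [cc_rec hq0 hq]
      have a1 : ee q j = ee q (j - 1) * q ^ (j - 1) := by
        have := ee_succ hq0 (j - 1); rwa [sub_add_cancel] at this
      have a2 : x ^ j = x ^ (j - 1) * x := by rw [← zpow_add_one₀ hx]; congr 1; ring
      have a3 : x ^ (j + 1) = x ^ j * x := zpow_add_one₀ hx j
      have a4 : (-1 : ℂ) ^ j = - (-1) ^ (j - 1) := by
        have := zpow_add_one₀ (a := (-1:ℂ)) (by norm_num) (j - 1)
        rw [sub_add_cancel] at this; rw [this]; ring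
      have a5 : (-1 : ℂ) ^ (j + 1) = - (-1) ^ j := by
        rw [zpow_add_one₀ (by norm_num)]; ring
      have a6 : q ^ ((n:ℤ) + 1 - j) * q ^ (j - 1) = q ^ n := by
        rw [← zpow_add₀ hq0, ← zpow_natCast]; congr 1; ring
      have a7 : q ^ ((n:ℤ) + 1 + j) = q ^ (n + 1) * q ^ j := by
        rw [zpow_add₀ hq0]; congr 1
      rw [add_mul, add_mul]
      congr 1
      · congr 1
        · ring
        · rw [a1, a2, a4, ← a6]; ring
      · rw [ee_succ hq0, a3, a5, a7]; field_simp

lemma jtp {q x : ℂ} (hq0 : q ≠ 0) (hq : ‖q‖ < 1) (hx : x ≠ 0) :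
    ∑' j : ℤ, (-1) ^ j * (ee q j * x ^ j) = Po q q * (Po q x * Po q (q / x)) := by
  have hE := Po_ne' hq hq
  have hqf : Tendsto (qf q) atTop (𝓝 (Po q q)) := (Po_hasProd hq q).tendsto_prod_nat
  have hqfi : Tendsto (fun n => (qf q n)⁻¹) atTop (𝓝 (Po q q)⁻¹) := hqf.inv₀ hE
  obtain ⟨M1, hM1⟩ := (Metric.isBounded_range_of_tendsto _ hqf).exists_norm_le
  obtain ⟨M2, hM2⟩ := (Metric.isBounded_range_of_tendsto _ hqfi).exists_norm_le
  have hM1' : ∀ n, ‖qf q n‖ ≤ M1 := fun n => hM1 _ ⟨n, rfl⟩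
  have hM2' : ∀ n, ‖(qf q n)⁻¹‖ ≤ M2 := fun n => hM2 _ ⟨n, rfl⟩
  have hM10 : 0 ≤ M1 := (norm_nonneg _).trans (hM1' 0)
  have hM20 : 0 ≤ M2 := (norm_nonneg _).trans (hM2' 0)
  have hrr : ∀ m, ‖rr q m‖ ≤ M2 := by
    intro m; unfold rr; split_ifs
    · simpa using hM20
    · exact hM2' _
  have hrl : ∀ j : ℤ, Tendsto (fun n : ℕ => rr q ((n:ℤ) + j)) atTop (𝓝 (Po q q)⁻¹) := by
    intro j
    have h1 : Tendsto (fun n : ℕ => ((n:ℤ) + j).toNat) atTop atTop := by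
      refine tendsto_atTop.mpr fun b => ?_
      filter_upwards [eventually_ge_atTop (b + j.natAbs)] with n hn
      omega
    refine (hqfi.comp h1).congr' ?_
    filter_upwards [eventually_ge_atTop (j.natAbs)] with n hn
    rw [rr, if_neg (by omega)]; rfl
  have hlim : Tendsto (fun n : ℕ => ∑' j : ℤ, cc q n j * ((-1) ^ j * (ee q j * x ^ j))) atTop
      (𝓝 (∑' j : ℤ, (Po q q)⁻¹ * ((-1) ^ j * (ee q j * x ^ j)))) := by
    refine tendsto_tsum_of_dominated_convergence
      (bound := fun j => M1 * M2 * M2 * ‖ee q j * x ^ j‖)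
      ((ee_summable hq0 hq hx).mul_left _) ?_ ?_
    · intro j
      refine Tendsto.mul_const _ ?_
      have h2 : Tendsto (fun n : ℕ => 2 * n) atTop atTop :=
        tendsto_id.const_mul_atTop' (by norm_num)
      have := ((hqf.comp h2).mul (hrl (-j))).mul (hrl j)
      rw [mul_inv_cancel₀ hE, one_mul] at this
      exact this
    · refine Filter.Eventually.of_forall fun n j => ?_
      rw [norm_mul, norm_mul ((-1)^j)]
      have : ‖((-1:ℂ)) ^ j‖ = 1 := by simp
      rw [this, one_mul]
      refine mul_le_mul_of_nonneg_right ?_ (norm_nonneg _)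
      unfold cc
      rw [norm_mul, norm_mul]
      have := hM1' (2*n)
      have := hrr (n - j)
      have := hrr (n + j)
      gcongr
  have hlim2 : Tendsto (fun n : ℕ => ∏ i ∈ Finset.range n, ((1 - x * q ^ i) * (1 - q / x * q ^ i)))
      atTop (𝓝 (Po q x * Po q (q / x))) :=
    ((Po_hasProd hq x).mul (Po_hasProd hq (q / x))).tendsto_prod_nat
  have h3 := tendsto_nhds_unique (hlim.congr fun n => (finite_jtp hq0 hq hx n).tsum_eq) hlim2
  rw [tsum_mul_left] at h3
  rw [← h3]
  field_simp

noncomputable def th (q x : ℂ) : ℂ := Po q x * Po q (q / x)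

noncomputable def Aa (q y : ℂ) (j : ℤ) : ℂ := q ^ (j * j) * y ^ (2 * j)
noncomputable def Bb (q y : ℂ) (j : ℤ) : ℂ := q ^ (j * j + j) * y ^ (2 * j + 1)

lemma two_div (m : ℤ) : 2 * (m * (m - 1) / 2) = m * (m - 1) :=
  Int.mul_ediv_cancel' (Int.even_mul_pred_self m).two_dvd

lemma Aa_summable {q y : ℂ} (hq0 : q ≠ 0) (hq : ‖q‖ < 1) (hy : y ≠ 0) :
    Summable fun j : ℤ => ‖Aa q y j‖ := by
  have h := ee_summable (q := q ^ 2) (x := q * y ^ 2) (pow_ne_zero _ hq0)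
    (by rw [norm_pow]; exact pow_lt_one₀ (norm_nonneg _) hq (by norm_num))
    (mul_ne_zero hq0 (pow_ne_zero _ hy))
  refine h.congr fun j => ?_
  congr 1
  unfold ee Aa
  rw [mul_zpow, ← zpow_natCast, ← zpow_mul, ← zpow_natCast, ← zpow_mul, ← mul_assoc,
    ← zpow_add₀ hq0]
  push_cast
  rw [two_div]
  congr 2
  ring

lemma Bb_summable {q y : ℂ} (hq0 : q ≠ 0) (hq : ‖q‖ < 1) (hy : y ≠ 0) :
    Summable fun j : ℤ => ‖Bb q y j‖ := by
  have h := ee_summable (q := q ^ 2) (x := q ^ 2 * y ^ 2) (pow_ne_zero _ hq0)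
    (by rw [norm_pow]; exact pow_lt_one₀ (norm_nonneg _) hq (by norm_num))
    (mul_ne_zero (pow_ne_zero _ hq0) (pow_ne_zero _ hy))
  refine (h.mul_left ‖y‖).congr fun j => ?_
  rw [← norm_mul]
  congr 1
  unfold ee Bb
  rw [mul_zpow, ← zpow_natCast, ← zpow_mul, ← zpow_mul, ← zpow_natCast, ← zpow_mul,
    zpow_add_one₀ hy, show j * j + j = j * (j - 1) + 2 * j by ring, zpow_add₀ hq0]
  push_cast
  rw [two_div]
  ring

set_option maxHeartbeats 1000000 in
lemma bil {q x y : ℂ} (hq0 : q ≠ 0) (hq : ‖q‖ < 1) (hx : x ≠ 0) (hy : y ≠ 0) :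
    Po q q ^ 2 * (th q (x * y) * th q (x / y)) =
      x * ((∑' j, Bb q x j) * (∑' j, Aa q y j) - (∑' j, Aa q x j) * (∑' j, Bb q y j)) := by
  have hxy : x * y ≠ 0 := mul_ne_zero hx hy
  have hxy' : x / y ≠ 0 := div_ne_zero hx hy
  have s1 : Summable fun j : ℤ => ‖(-1 : ℂ) ^ j * (ee q j * (x * y) ^ j)‖ := by
    refine (ee_summable hq0 hq hxy).congr fun j => ?_
    rw [norm_mul ((-1) ^ j)]; simp
  have s2 : Summable fun j : ℤ => ‖(-1 : ℂ) ^ j * (ee q j * (x / y) ^ j)‖ := by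
    refine (ee_summable hq0 hq hxy').congr fun j => ?_
    rw [norm_mul ((-1) ^ j)]; simp
  have t1 := (summable_mul_of_summable_norm s1 s2).hasSum
  rw [← tsum_mul_tsum_of_summable_norm s1 s2, jtp hq0 hq hxy, jtp hq0 hq hxy'] at t1
  let F : ℤ × ℤ → ℂ := fun p => ((-1 : ℂ) ^ p.1 * (ee q p.1 * (x * y) ^ p.1)) *
    ((-1 : ℂ) ^ p.2 * (ee q p.2 * (x / y) ^ p.2))
  let φ0 : ℤ × ℤ → ℤ × ℤ := fun p => (p.1 + 1 + p.2, p.1 + 1 - p.2)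
  let φ1 : ℤ × ℤ → ℤ × ℤ := fun p => (p.1 + p.2 + 1, p.1 - p.2)
  have i0 : Function.Injective φ0 := by
    rintro ⟨a, b⟩ ⟨c, d⟩ h
    simp only [φ0, Prod.mk.injEq] at h ⊢; omega
  have i1 : Function.Injective φ1 := by
    rintro ⟨a, b⟩ ⟨c, d⟩ h
    simp only [φ1, Prod.mk.injEq] at h ⊢; omega
  have hc : IsCompl (Set.range φ0) (Set.range φ1) := by
    rw [← compl_eq_iff_isCompl]
    ext ⟨m, n⟩
    simp only [Set.mem_compl_iff, Set.mem_range, φ0, φ1, Prod.exists, Prod.mk.injEq]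
    constructor
    · intro h
      rcases Int.even_or_odd' (m + n) with ⟨k, hk | hk⟩
      · exact absurd ⟨k - 1, m - k, by omega, by omega⟩ h
      · exact ⟨k, m - k - 1, by omega, by omega⟩
    · rintro ⟨a, b, h1, h2⟩ ⟨c, d, h3, h4⟩
      omega
  have key : ∀ m n s d : ℤ, m + n = s → m - n = d → F (m, n) = (-1) ^ s *
      (q ^ (m * (m - 1) / 2 + n * (n - 1) / 2) * (x ^ s * y ^ d)) := by
    rintro m n s d rfl rfl
    simp only [F, ee]
    rw [zpow_add₀ (by norm_num), zpow_add₀ hq0, zpow_add₀ hx, zpow_sub₀ hy, mul_zpow, div_zpow]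
    ring
  have f0 : ∀ p : ℤ × ℤ, F (φ0 p) = (x * Bb q x p.1) * Aa q y p.2 := by
    rintro ⟨i, j⟩
    simp only [φ0]
    rw [key _ _ (2 * (i + 1)) (2 * j) (by ring) (by ring)]
    have e : (i + 1 + j) * (i + 1 + j - 1) / 2 + (i + 1 - j) * (i + 1 - j - 1) / 2 =
        (i * i + i) + j * j := by
      have h1 := two_div (i + 1 + j)
      have h2 := two_div (i + 1 - j)
      have : 2 * ((i + 1 + j) * (i + 1 + j - 1) / 2 + (i + 1 - j) * (i + 1 - j - 1) / 2) =
        2 * ((i * i + i) + j * j) := by linear_combination h1 + h2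
      omega
    rw [e, zpow_add₀ hq0, zpow_mul (-1 : ℂ)]
    unfold Aa Bb
    have h3 : x ^ (2 * (i + 1)) = x ^ (2 * i + 1) * x := by
      rw [← zpow_add_one₀ hx]; congr 1; ring
    rw [h3]
    norm_num
    ring
  have f1 : ∀ p : ℤ × ℤ, F (φ1 p) = (-x * Aa q x p.1) * Bb q y p.2 := by
    rintro ⟨i, j⟩
    simp only [φ1]
    rw [key _ _ (2 * i + 1) (2 * j + 1) (by ring) (by ring)]
    have e : (i + j + 1) * (i + j + 1 - 1) / 2 + (i - j) * (i - j - 1) / 2 =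
        i * i + (j * j + j) := by
      have h1 := two_div (i + j + 1)
      have h2 := two_div (i - j)
      have : 2 * ((i + j + 1) * (i + j + 1 - 1) / 2 + (i - j) * (i - j - 1) / 2) =
        2 * (i * i + (j * j + j)) := by linear_combination h1 + h2
      omega
    rw [e, zpow_add₀ hq0, zpow_add_one₀ (by norm_num : (-1 : ℂ) ≠ 0), zpow_mul (-1 : ℂ)]
    unfold Aa Bb
    rw [zpow_add_one₀ hx]
    norm_num
    ring
  have sA := fun {z : ℂ} (hz : z ≠ 0) => Aa_summable hq0 hq hz
  have sB := fun {z : ℂ} (hz : z ≠ 0) => Bb_summable hq0 hq hz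
  have sxB : Summable fun j => ‖x * Bb q x j‖ := by
    simpa only [norm_mul] using (sB hx).mul_left ‖x‖
  have sxA : Summable fun j => ‖-x * Aa q x j‖ := by
    simpa only [norm_mul] using (sA hx).mul_left ‖-x‖
  have g0 := (summable_mul_of_summable_norm sxB (sA hy)).hasSum
  rw [← tsum_mul_tsum_of_summable_norm sxB (sA hy)] at g0
  have g1 := (summable_mul_of_summable_norm sxA (sB hy)).hasSum
  rw [← tsum_mul_tsum_of_summable_norm sxA (sB hy)] at g1
  simp only [← f0] at g0
  simp only [← f1] at g1
  have G0 := i0.hasSum_range_iff (f := F) |>.mpr g0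
  have G1 := i1.hasSum_range_iff (f := F) |>.mpr g1
  have G := HasSum.add_isCompl (f := F) hc G0 G1
  have := t1.unique G
  rw [tsum_mul_left, tsum_mul_left] at this
  unfold th
  linear_combination this

lemma three_term {q x u v : ℂ} (hq0 : q ≠ 0) (hq : ‖q‖ < 1) (hx : x ≠ 0) (hu : u ≠ 0) (hv : v ≠ 0) :
    th q x ^ 2 * (th q (u * v) * th q (u / v)) - th q (x * v) * th q (x / v) * th q u ^ 2 =
      u * (th q v * th q (1 / v)) * (th q (x * u) * th q (x / u)) := by
  have hE := Po_ne' hq hq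
  have hv' : v⁻¹ ≠ 0 := inv_ne_zero hv
  have b1 := bil hq0 hq hx (one_ne_zero)
  have b2 := bil hq0 hq hu (one_ne_zero)
  have b3 := bil hq0 hq hu hv
  have b4 := bil hq0 hq hx hv
  have b5 := bil hq0 hq (one_ne_zero) hv
  have b6 := bil hq0 hq hx hu
  rw [mul_one, div_one] at b1 b2
  rw [one_mul] at b5
  have hE4 : Po q q ^ 4 ≠ 0 := pow_ne_zero _ hE
  apply mul_left_cancel₀ hE4
  have e1 : Po q q ^ 4 * (th q x ^ 2 * (th q (u * v) * th q (u / v)) -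
      th q (x * v) * th q (x / v) * th q u ^ 2) =
      (Po q q ^ 2 * (th q x * th q x)) * (Po q q ^ 2 * (th q (u * v) * th q (u / v))) -
      (Po q q ^ 2 * (th q (x * v) * th q (x / v))) * (Po q q ^ 2 * (th q u * th q u)) := by ring
  have e2 : Po q q ^ 4 * (u * (th q v * th q (1 / v)) * (th q (x * u) * th q (x / u))) =
     u * (Po q q ^ 2 * (th q v * th q (1 / v))) * (Po q q ^ 2 * (th q (x * u) * th q (x / u))) := by
    ring
  rw [e1, e2, b1, b2, b3, b4, b5, b6]
  ring

noncomputable def tz (q z : ℂ) (n : ℕ) : ℂ := z * q ^ n / (1 - z * q ^ n) ^ 2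

lemma one_sub_ne {q z : ℂ} (hq : ‖q‖ < 1) (hz : ‖z‖ < 1) (n : ℕ) : 1 - z * q ^ n ≠ 0 := by
  intro h0
  have h1 : z * q ^ n = 1 := (sub_eq_zero.mp h0).symm
  have h2 : ‖z * q ^ n‖ = 1 := by rw [h1]; simp
  rw [norm_mul, norm_pow] at h2
  have : ‖q‖ ^ n ≤ 1 := pow_le_one₀ (norm_nonneg _) hq.le
  nlinarith [norm_nonneg z]

lemma tz_summable {q z : ℂ} (hq : ‖q‖ < 1) (hz : ‖z‖ < 1) : Summable fun n => ‖tz q z n‖ := by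
  have hg := (summable_geometric_of_lt_one (norm_nonneg _) hq).mul_left (‖z‖ / (1 - ‖z‖) ^ 2)
  refine Summable.of_nonneg_of_le (fun n => norm_nonneg _) (fun n => ?_) hg
  unfold tz
  rw [norm_div, norm_mul, norm_pow, norm_pow, div_mul_eq_mul_div]
  have h1 : 0 < 1 - ‖z‖ := by linarith
  have h2 : 1 - ‖z‖ ≤ ‖1 - z * q ^ n‖ := by
    have a := norm_sub_norm_le 1 (z * q ^ n)
    rw [norm_mul, norm_pow, norm_one] at a
    have : ‖q‖ ^ n ≤ 1 := pow_le_one₀ (norm_nonneg _) hq.le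
    nlinarith [norm_nonneg z]
  gcongr

noncomputable def Rr (q z w : ℂ) : ℂ := ∏' n, (1 - w * tz q z n)

lemma Rr_deriv {q z : ℂ} (hq : ‖q‖ < 1) (hz : ‖z‖ < 1) :
    HasDerivAt (Rr q z) (-∑' n, tz q z n) 0 := deriv_prod (tz_summable hq hz)

lemma Rr_zero (q z : ℂ) : Rr q z 0 = 1 := by simp [Rr]

lemma Rr_hasProd {q z : ℂ} (hq : ‖q‖ < 1) (hz : ‖z‖ < 1) (w : ℂ) :
    HasProd (fun n => 1 - w * tz q z n) (Rr q z w) := by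
  refine Multipliable.hasProd ?_
  have : Summable fun n => ‖-(w * tz q z n)‖ := by
    simpa [norm_mul] using (tz_summable hq hz).mul_left ‖w‖
  simpa [sub_eq_add_neg] using multipliable_one_add_of_summable this

lemma Po_pair {q z v : ℂ} (hq : ‖q‖ < 1) (hz : ‖z‖ < 1) (hv : v ≠ 0) :
    Po q (z * v) * Po q (z / v) = Po q z ^ 2 * Rr q z (v + 1 / v - 2) := by
  have h1 := (Po_hasProd hq (z * v)).mul (Po_hasProd hq (z / v))
  have h2 := ((Po_hasProd hq z).mul (Po_hasProd hq z)).mul (Rr_hasProd hq hz (v + 1 / v - 2))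
  rw [pow_two]
  refine h1.unique ?_
  convert h2 using 2 with n
  have := one_sub_ne hq hz n
  unfold tz
  field_simp
  ring

noncomputable def Fx (q x : ℂ) : ℂ :=
  x / (1 - x) ^ 2 + ∑' n, tz q (x * q) n + ∑' n, tz q (q / x) n

lemma th_eq {q x : ℂ} (hq : ‖q‖ < 1) : th q x = (1 - x) * Po q (x * q) * Po q (q / x) := by
  rw [th, Po_succ hq x]

lemma th_pair {q x v : ℂ} (hq : ‖q‖ < 1) (hx : ‖x‖ = 1) (hx1 : x ≠ 1) (hv : v ≠ 0) :
    th q (x * v) * th q (x / v) = th q x ^ 2 * ((1 - (v + 1 / v - 2) * (x / (1 - x) ^ 2)) *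
      Rr q (x * q) (v + 1 / v - 2) * Rr q (q / x) (v + 1 / v - 2)) := by
  have hx0 : x ≠ 0 := by rintro rfl; simp at hx
  have h1 : ‖x * q‖ < 1 := by rw [norm_mul, hx, one_mul]; exact hq
  have h2 : ‖q / x‖ < 1 := by rw [norm_div, hx, div_one]; exact hq
  have p1 := Po_pair hq h1 hv
  have p2 := Po_pair hq h2 hv
  rw [th_eq hq, th_eq hq, th_eq hq]
  have e1 : x * v * q = x * q * v := by ring
  have e2 : x / v * q = x * q / v := by ring
  have e3 : q / (x * v) = q / x / v := by rw [div_div]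
  have e4 : q / (x / v) = q / x * v := by field_simp
  rw [e1, e2, e3, e4]
  have hxx : (1 - x) ≠ 0 := sub_ne_zero.mpr (Ne.symm hx1)
  have e5 : (1 - x * v) * (1 - x / v) = (1 - x) ^ 2 * (1 - (v + 1 / v - 2) * (x / (1 - x) ^ 2)) := by
    field_simp
    ring
  calc _ = ((1 - x * v) * (1 - x / v)) * (Po q (x * q * v) * Po q (x * q / v)) *
        (Po q (q / x * v) * Po q (q / x / v)) := by ring
    _ = _ := by rw [e5, p1, p2]; ring

lemma th_vv {q v : ℂ} (hq : ‖q‖ < 1) (hv : v ≠ 0) :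
    th q v * th q (1 / v) = -(v + 1 / v - 2) * (Po q q ^ 2 * Rr q q (v + 1 / v - 2)) ^ 2 := by
  rw [← Po_pair hq hq hv, th_eq hq, th_eq hq]
  have e1 : 1 / v * q = q / v := by ring
  have e2 : q / (1 / v) = q * v := by field_simp
  rw [e1, e2, mul_comm v q]
  have : (1 - v) * (1 - 1 / v) = -(v + 1 / v - 2) := by field_simp; ring
  rw [← this]; ring

lemma exists_v (w : ℂ) : ∃ v : ℂ, v ≠ 0 ∧ v + 1 / v - 2 = w := by
  obtain ⟨s, hs⟩ := IsAlgClosed.exists_pow_nat_eq (discrim 1 (-(w + 2)) 1) (n := 2) (by norm_num)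
  obtain ⟨v, hv⟩ := exists_quadratic_eq_zero (a := (1:ℂ)) (b := -(w+2)) (c := 1) one_ne_zero
    ⟨s, by rw [← hs]; ring⟩
  have hv0 : v ≠ 0 := by rintro rfl; simp at hv
  refine ⟨v, hv0, ?_⟩
  field_simp
  linear_combination hv

lemma wp {q x u : ℂ} (hq0 : q ≠ 0) (hq : ‖q‖ < 1) (hx : ‖x‖ = 1) (hx1 : x ≠ 1)
    (hu : ‖u‖ = 1) (hu1 : u ≠ 1) :
    th q x ^ 2 * th q u ^ 2 * (Fx q x - Fx q u) =
      -u * Po q q ^ 4 * (th q (x * u) * th q (x / u)) := by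
  have hx0 : x ≠ 0 := by rintro rfl; simp at hx
  have hu0 : u ≠ 0 := by rintro rfl; simp at hu
  have H : ∀ {x : ℂ}, ‖x‖ = 1 → HasDerivAt (fun w : ℂ => (1 - w * (x / (1 - x) ^ 2)) *
      Rr q (x * q) w * Rr q (q / x) w) (-Fx q x) 0 := by
    intro x hx
    have h1 : ‖x * q‖ < 1 := by rw [norm_mul, hx, one_mul]; exact hq
    have h2 : ‖q / x‖ < 1 := by rw [norm_div, hx, div_one]; exact hq
    have d0 : HasDerivAt (fun w : ℂ => 1 - w * (x / (1 - x) ^ 2)) (-(x / (1 - x) ^ 2)) 0 := by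
      simpa using ((hasDerivAt_id (0:ℂ)).mul_const (x / (1 - x) ^ 2)).const_sub 1
    have d := (d0.mul (Rr_deriv hq h1)).mul (Rr_deriv hq h2)
    refine d.congr_deriv ?_
    simp only [Pi.mul_apply, Rr_zero, Fx]
    ring
  have d1 := (((H hu).sub (H hx)).const_mul (th q x ^ 2 * th q u ^ 2))
  have d2 : HasDerivAt (fun w : ℂ => w * (-u * (Po q q ^ 2 * Rr q q w) ^ 2 *
      (th q (x * u) * th q (x / u)))) (-u * Po q q ^ 4 * (th q (x * u) * th q (x / u))) 0 := by
    have := (hasDerivAt_id (0:ℂ)).mul (((((Rr_deriv hq hq).const_mul (Po q q ^ 2)).pow 2).const_mul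
      (-u)).mul_const (th q (x * u) * th q (x / u)))
    refine this.congr_deriv ?_
    simp only [Pi.pow_apply, Rr_zero, id]
    ring
  have d1' := d1.congr_deriv (g' := th q x ^ 2 * th q u ^ 2 * (Fx q x - Fx q u)) (by ring)
  refine d1'.unique (d2.congr_of_eventuallyEq (Filter.Eventually.of_forall fun w => ?_))
  obtain ⟨v, hv, rfl⟩ := exists_v w
  have t := three_term hq0 hq hx0 hu0 hv
  rw [th_pair hq hx hx1 hv, th_pair hq hu hu1 hv, th_vv hq hv] at t
  simp only [Pi.sub_apply]
  linear_combination t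

lemma Po_two {q : ℂ} (hq : ‖q‖ < 1) (z : ℂ) : Po q z * Po q (-z) = Po (q ^ 2) (z ^ 2) := by
  have hq' : ‖q ^ 2‖ < 1 := by
    rw [norm_pow]; exact pow_lt_one₀ (norm_nonneg _) hq (by norm_num)
  refine ((Po_hasProd hq z).mul (Po_hasProd hq (-z))).unique ?_
  convert Po_hasProd hq' (z ^ 2) using 2 with n
  ring

lemma Po_five {q ζ : ℂ} (hq : ‖q‖ < 1) (hζ : 1 + ζ + ζ ^ 2 + ζ ^ 3 + ζ ^ 4 = 0) (z : ℂ) :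
    Po q z * Po q (ζ * z) * Po q (ζ ^ 2 * z) * Po q (ζ ^ 3 * z) * Po q (ζ ^ 4 * z) =
      Po (q ^ 5) (z ^ 5) := by
  have hq' : ‖q ^ 5‖ < 1 := by
    rw [norm_pow]; exact pow_lt_one₀ (norm_nonneg _) hq (by norm_num)
  refine (((((Po_hasProd hq z).mul (Po_hasProd hq (ζ * z))).mul (Po_hasProd hq (ζ ^ 2 * z))).mul
    (Po_hasProd hq (ζ ^ 3 * z))).mul (Po_hasProd hq (ζ ^ 4 * z))).unique ?_
  convert Po_hasProd hq' (z ^ 5) using 2 with n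
  have h5 : ζ ^ 4 = -1 - ζ - ζ ^ 2 - ζ ^ 3 := by linear_combination hζ
  have h6 : z ^ 5 * (q ^ 5) ^ n = (z * q ^ n) ^ 5 := by ring
  rw [h6]
  generalize hy : z * q ^ n = y
  simp only [mul_assoc, hy]
  grind

lemma eval_F {q ζ : ℂ} (hq0 : q ≠ 0) (hq : ‖q‖ < 1) (hζ : 1 + ζ + ζ ^ 2 + ζ ^ 3 + ζ ^ 4 = 0)
    (hn : ‖ζ‖ = 1) :
    (Fx q (-ζ) - Fx q (-ζ ^ 2)) * Po (q ^ 10) (q ^ 10) ^ 2 =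
      (ζ + ζ ^ 4 - ζ ^ 2 - ζ ^ 3) * (Po q q * Po (q ^ 2) (q ^ 2) ^ 2 * Po (q ^ 5) (q ^ 5) ^ 3) := by
  have h0 : ζ ≠ 0 := by rintro rfl; simp at hn
  have h5 : ζ ^ 5 = 1 := by linear_combination (ζ - 1) * hζ
  have hx1 : -ζ ≠ 1 := by
    intro h
    have : ζ = -1 := by linear_combination -h
    rw [this] at hζ; norm_num at hζ
  have hu1 : -ζ ^ 2 ≠ 1 := by
    intro h
    have h2 : ζ ^ 2 = -1 := by linear_combination -h
    have : (1:ℂ) = 0 := by linear_combination hζ - (ζ ^ 2 + ζ) * h2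
    exact one_ne_zero this
  have w := wp (u := -ζ ^ 2) hq0 hq (by rwa [norm_neg] : ‖-ζ‖ = 1) hx1
    (by rw [norm_neg, norm_pow, hn, one_pow]) hu1
  have a1 : -ζ * -ζ ^ 2 = ζ ^ 3 := by ring
  have a2 : -ζ / -ζ ^ 2 = ζ ^ 4 := by field_simp; rw [← h5]
  rw [a1, a2, th_eq hq, th_eq hq, th_eq hq, th_eq hq] at w
  have c1 : q / -ζ = ζ ^ 4 * -q := by field_simp; rw [h5]
  have c2 : q / -ζ ^ 2 = ζ ^ 3 * -q := by field_simp; rw [h5]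
  have c3 : q / ζ ^ 3 = ζ ^ 2 * q := by field_simp; rw [h5]
  have c4 : q / ζ ^ 4 = ζ * q := by field_simp; rw [h5]
  have c5 : -ζ * q = ζ * -q := by ring
  have c6 : -ζ ^ 2 * q = ζ ^ 2 * -q := by ring
  rw [c1, c2, c3, c4, c5, c6] at w
  have f1 := Po_five hq hζ q
  have f2 := Po_five hq hζ (-q)
  have g1 := Po_two hq q
  have hq5 : ‖q ^ 5‖ < 1 := by
    rw [norm_pow]; exact pow_lt_one₀ (norm_nonneg _) hq (by norm_num)
  have g2 := Po_two hq5 (q ^ 5)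
  rw [show (-q) ^ 5 = -q ^ 5 by ring] at f2
  rw [show (q ^ 5) ^ 2 = q ^ 10 by ring] at g2
  have hE1 := Po_ne' hq hq
  generalize Fx q (-ζ) - Fx q (-ζ ^ 2) = D at *
  generalize Po q q = E1 at *
  generalize Po (q ^ 2) (q ^ 2) = E2 at *
  generalize Po (q ^ 5) (q ^ 5) = E5 at *
  generalize Po (q ^ 10) (q ^ 10) = E10 at *
  generalize Po q (-q) = n1 at *
  generalize Po (q ^ 5) (-q ^ 5) = n5 at *
  generalize Po q (ζ * q) = p1 at *
  generalize Po q (ζ ^ 2 * q) = p2 at *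
  generalize Po q (ζ ^ 3 * q) = p3 at *
  generalize Po q (ζ ^ 4 * q) = p4 at *
  generalize Po q (ζ * -q) = m1 at *
  generalize Po q (ζ ^ 2 * -q) = m2 at *
  generalize Po q (ζ ^ 3 * -q) = m3 at *
  generalize Po q (ζ ^ 4 * -q) = m4 at *
  have k1 : ((1 + ζ) * (1 + ζ ^ 2)) ^ 2 = ζ ^ 3 := by
    have : (1 + ζ) * (1 + ζ ^ 2) = - ζ ^ 4 := by linear_combination hζ
    rw [this]; linear_combination ζ ^ 3 * h5
  have k2 : ζ ^ 2 * (1 - ζ ^ 3) * (1 - ζ ^ 4) = ζ ^ 3 * (ζ + ζ ^ 4 - ζ ^ 2 - ζ ^ 3) := by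
    linear_combination (ζ ^ 4 - ζ ^ 2) * h5
  have w2 : (m1 * m2 * m3 * m4) ^ 2 * D = (ζ + ζ ^ 4 - ζ ^ 2 - ζ ^ 3) * E1 ^ 4 *
      (p1 * p2 * p3 * p4) := by
    apply mul_left_cancel₀ (pow_ne_zero 3 h0)
    linear_combination w - (m1 * m2 * m3 * m4) ^ 2 * D * k1 + E1 ^ 4 * (p1 * p2 * p3 * p4) * k2
  have m : (m1 * m2 * m3 * m4) * E2 * E5 = E10 * E1 := by
    rw [← g1, ← g2, ← f2]; ring
  apply mul_left_cancel₀ (pow_ne_zero 2 hE1)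
  have z1 : E1 ^ 2 * (D * E10 ^ 2) = ((m1 * m2 * m3 * m4) ^ 2 * D) * (E2 * E5) ^ 2 := by
    calc _ = D * (E10 * E1) ^ 2 := by ring
      _ = _ := by rw [← m]; ring
  rw [z1, w2]
  linear_combination (ζ + ζ ^ 4 - ζ ^ 2 - ζ ^ 3) * E1 ^ 3 * (E2 * E5) ^ 2 * f1

def chi (n : ℕ) : ℤ :=
  if n % 10 = 1 ∨ n % 10 = 2 ∨ n % 10 = 8 ∨ n % 10 = 9 then 1
  else if n % 10 = 3 ∨ n % 10 = 4 ∨ n % 10 = 6 ∨ n % 10 = 7 then -1 else 0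

lemma chi_abs (n : ℕ) : |(chi n)| ≤ 1 := by
  unfold chi; split_ifs <;> simp

lemma chi_zeta {ζ : ℂ} (hζ : 1 + ζ + ζ ^ 2 + ζ ^ 3 + ζ ^ 4 = 0) (n : ℕ) :
    (-ζ) ^ n + (-ζ ^ 4) ^ n - (-ζ ^ 2) ^ n - (-ζ ^ 3) ^ n =
      -(ζ + ζ ^ 4 - ζ ^ 2 - ζ ^ 3) * (chi n : ℂ) := by
  have h5 : ζ ^ 5 = 1 := by linear_combination (ζ - 1) * hζ
  have hr : ∀ a : ℕ, (-ζ ^ a) ^ n = (-ζ ^ a) ^ (n % 10) := by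
    intro a
    conv_lhs => rw [← Nat.div_add_mod n 10]
    rw [pow_add, pow_mul]
    have : (-ζ ^ a) ^ 10 = 1 := by
      rw [show (-ζ ^ a) ^ 10 = ((ζ ^ 5) ^ a) ^ 2 by ring, h5]; simp
    rw [this, one_pow, one_mul]
  have hr1 := hr 1
  rw [pow_one] at hr1
  rw [hr1, hr 2, hr 3, hr 4]
  unfold chi
  have hlt : n % 10 < 10 := Nat.mod_lt _ (by norm_num)
  generalize n % 10 = r at *
  clear hr hr1
  have h6 : ζ ^ 4 = -1 - ζ - ζ ^ 2 - ζ ^ 3 := by linear_combination hζ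
  interval_cases r <;> norm_num <;> grind

lemma lam_summable {q : ℂ} (hq : ‖q‖ < 1) :
    Summable (Function.uncurry fun (m n : ℕ) => (chi n : ℂ) * (n * (q ^ (m + 1)) ^ n)) := by
  have h1 : Summable fun n : ℕ => (n : ℝ) * ‖q‖ ^ n := by
    have := (hasSum_coe_mul_geometric_of_norm_lt_one (r := ‖q‖) (by simpa using hq)).summable
    exact this
  have h2 := summable_geometric_of_lt_one (norm_nonneg _) hq
  have h3 := h2.mul_of_nonneg h1 (fun n => by positivity) (fun n => by positivity)
  refine Summable.of_norm_bounded h3 ?_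
  rintro ⟨m, n⟩
  simp only [Function.uncurry]
  rw [norm_mul, norm_mul, norm_pow, norm_pow]
  have c1 : ‖(chi n : ℂ)‖ ≤ 1 := by
    rw [Complex.norm_intCast]; exact_mod_cast chi_abs n
  have c2 : ‖(n : ℂ)‖ = n := by simp
  rw [c2]
  rcases Nat.eq_zero_or_pos n with rfl | hn
  · simp
  · have c3 : (‖q‖ ^ (m + 1)) ^ n ≤ ‖q‖ ^ m * ‖q‖ ^ n := by
      rw [← pow_mul, ← pow_add]
      refine pow_le_pow_of_le_one (norm_nonneg _) hq.le ?_
      nlinarith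
    calc _ ≤ 1 * ((n : ℝ) * (‖q‖ ^ m * ‖q‖ ^ n)) := by gcongr
      _ = _ := by ring

lemma lambert {q ζ : ℂ} (hq : ‖q‖ < 1) (hζ : 1 + ζ + ζ ^ 2 + ζ ^ 3 + ζ ^ 4 = 0)
    (hn : ‖ζ‖ = 1) :
    Fx q (-ζ) - Fx q (-ζ ^ 2) = (ζ + ζ ^ 4 - ζ ^ 2 - ζ ^ 3) *
      (1 - ∑' n : ℕ, (chi n : ℂ) * (n * (q ^ n / (1 - q ^ n)))) := by
  have h0 : ζ ≠ 0 := by rintro rfl; simp at hn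
  have h5 : ζ ^ 5 = 1 := by linear_combination (ζ - 1) * hζ
  have hna : ∀ a : ℕ, ‖-ζ ^ a‖ = 1 := fun a => by rw [norm_neg, norm_pow, hn, one_pow]
  have hz : ∀ a : ℕ, ‖-ζ ^ a * q‖ < 1 := fun a => by rw [norm_mul, hna, one_mul]; exact hq
  have st : ∀ a : ℕ, Summable (tz q (-ζ ^ a * q)) := fun a => (tz_summable hq (hz a)).of_norm
  have ht : ∀ a m : ℕ, HasSum (fun n : ℕ => (n : ℂ) * (-ζ ^ a * q ^ (m + 1)) ^ n)
      (tz q (-ζ ^ a * q) m) := by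
    intro a m
    have := hasSum_coe_mul_geometric_of_norm_lt_one (r := -ζ ^ a * q ^ (m + 1)) (by
      rw [norm_mul, hna, one_mul, norm_pow]
      exact pow_lt_one₀ (norm_nonneg _) hq (by omega))
    have e : -ζ ^ a * q * q ^ m = -ζ ^ a * q ^ (m + 1) := by ring
    rw [tz, e]
    exact this
  have hm : ∀ m : ℕ, tz q (-ζ ^ 1 * q) m + tz q (-ζ ^ 4 * q) m - tz q (-ζ ^ 2 * q) m
      - tz q (-ζ ^ 3 * q) m = -(ζ + ζ ^ 4 - ζ ^ 2 - ζ ^ 3) *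
        ∑' n : ℕ, (chi n : ℂ) * (n * (q ^ (m + 1)) ^ n) := by
    intro m
    have h := (((ht 1 m).add (ht 4 m)).sub (ht 2 m)).sub (ht 3 m)
    rw [← h.tsum_eq, ← tsum_mul_left]
    refine tsum_congr fun n => ?_
    have hc := chi_zeta hζ n
    rw [mul_pow, mul_pow, mul_pow, mul_pow, pow_one]
    linear_combination (n * (q ^ (m + 1)) ^ n) * hc
  have hsum : ∑' m, tz q (-ζ ^ 1 * q) m + ∑' m, tz q (-ζ ^ 4 * q) m - ∑' m, tz q (-ζ ^ 2 * q) m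
      - ∑' m, tz q (-ζ ^ 3 * q) m = -(ζ + ζ ^ 4 - ζ ^ 2 - ζ ^ 3) *
        ∑' n : ℕ, (chi n : ℂ) * (n * (q ^ n / (1 - q ^ n))) := by
    rw [← (st 1).tsum_add (st 4), ← ((st 1).add (st 4)).tsum_sub (st 2),
      ← (((st 1).add (st 4)).sub (st 2)).tsum_sub (st 3)]
    simp only [hm]
    rw [tsum_mul_left, ← (lam_summable hq).tsum_comm]
    congr 1
    refine tsum_congr fun n => ?_
    rw [tsum_mul_left, tsum_mul_left]
    rcases Nat.eq_zero_or_pos n with rfl | hn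
    · simp
    · have hqn : ‖q ^ n‖ < 1 := by
        rw [norm_pow]; exact pow_lt_one₀ (norm_nonneg _) hq (by omega)
      have := (hasSum_geometric_of_norm_lt_one hqn).mul_left (q ^ n)
      rw [div_eq_mul_inv, ← this.tsum_eq]
      congr 2
      refine tsum_congr fun m => ?_
      ring
  have c1 : q / -ζ = -ζ ^ 4 * q := by field_simp; rw [h5]; ring
  have c2 : q / -ζ ^ 2 = -ζ ^ 3 * q := by field_simp; rw [h5]; ring
  unfold Fx
  rw [c1, c2]
  rw [pow_one] at hsum
  have n1 : 1 + ζ ≠ 0 := by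
    intro h
    have h2 : ζ = -1 := by linear_combination h
    rw [h2] at hζ; norm_num at hζ
  have n2 : 1 + ζ ^ 2 ≠ 0 := by
    intro h
    have : (1:ℂ) = 0 := by linear_combination hζ - (ζ ^ 2 + ζ) * h
    exact one_ne_zero this
  have hc : -ζ / (1 - -ζ) ^ 2 - -ζ ^ 2 / (1 - -ζ ^ 2) ^ 2 = ζ + ζ ^ 4 - ζ ^ 2 - ζ ^ 3 := by
    rw [sub_neg_eq_add, sub_neg_eq_add]
    field_simp
    have k1 : (1 + ζ) ^ 2 * (1 + ζ ^ 2) ^ 2 = ζ ^ 3 := by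
      have : (1 + ζ) * (1 + ζ ^ 2) = - ζ ^ 4 := by linear_combination hζ
      rw [← mul_pow, this]; linear_combination ζ ^ 3 * h5
    grind
  linear_combination hc + hsum

lemma zeta_exists : ∃ ζ : ℂ, 1 + ζ + ζ ^ 2 + ζ ^ 3 + ζ ^ 4 = 0 ∧ ‖ζ‖ = 1 := by
  have h := Complex.isPrimitiveRoot_exp 5 (by norm_num)
  refine ⟨_, ?_, h.norm'_eq_one (by norm_num)⟩
  have := h.geom_sum_eq_zero (by norm_num)
  simpa [Finset.sum_range_succ] using this

lemma mainB {q : ℂ} (hq0 : q ≠ 0) (hq : ‖q‖ < 1) :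
    (1 - ∑' n : ℕ, (chi n : ℂ) * (n * (q ^ n / (1 - q ^ n)))) * Po (q ^ 10) (q ^ 10) ^ 2 =
      Po q q * Po (q ^ 2) (q ^ 2) ^ 2 * Po (q ^ 5) (q ^ 5) ^ 3 := by
  obtain ⟨ζ, hζ, hn⟩ := zeta_exists
  have h := eval_F hq0 hq hζ hn
  rw [lambert hq hζ hn] at h
  have hs : ζ + ζ ^ 4 - ζ ^ 2 - ζ ^ 3 ≠ 0 := by
    intro h0
    have : (5:ℂ) = 0 := by
      have h5 : ζ ^ 5 = 1 := by linear_combination (ζ - 1) * hζ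
      have h2 : (ζ + ζ ^ 4 - ζ ^ 2 - ζ ^ 3) ^ 2 = 5 := by grind
      rw [h0] at h2; simpa using h2.symm
    norm_num at this
  apply mul_left_cancel₀ hs
  linear_combination h

lemma mainA {q : ℂ} (hq0 : q ≠ 0) (hq : ‖q‖ < 1) :
    Po (q ^ 10) (q ^ 5) ^ 4 * (Po (q ^ 10) (q ^ 4) * Po (q ^ 10) (q ^ 6)) *
      (Po (q ^ 10) (q ^ 2) * Po (q ^ 10) (q ^ 8)) =
    (Po (q ^ 10) (q ^ 4) * Po (q ^ 10) (q ^ 6)) ^ 2 * (Po (q ^ 10) (q ^ 3) * Po (q ^ 10) (q ^ 7)) ^ 2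
    - q ^ 2 * (Po (q ^ 10) (q ^ 1) * Po (q ^ 10) (q ^ 9)) ^ 2 *
       (Po (q ^ 10) (q ^ 2) * Po (q ^ 10) (q ^ 8)) ^ 2 := by
  have hp : ‖q ^ 10‖ < 1 := by
    rw [norm_pow]; exact pow_lt_one₀ (norm_nonneg _) hq (by norm_num)
  have t := three_term (q := q ^ 10) (x := q ^ 5) (u := q ^ 3) (v := q) (pow_ne_zero _ hq0) hp
    (pow_ne_zero _ hq0) (pow_ne_zero _ hq0) hq0
  have e1 : q ^ 3 * q = q ^ 4 := by ring
  have e2 : q ^ 3 / q = q ^ 2 := by field_simp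
  have e3 : q ^ 5 * q = q ^ 6 := by ring
  have e4 : q ^ 5 / q = q ^ 4 := by field_simp
  have e5 : q ^ 5 * q ^ 3 = q ^ 8 := by ring
  have e6 : q ^ 5 / q ^ 3 = q ^ 2 := by field_simp
  rw [e1, e2, e3, e4, e5, e6] at t
  have d : ∀ a b : ℕ, a + b = 10 → q ^ 10 / q ^ a = q ^ b := by
    intro a b h; rw [← h, pow_add]; field_simp
  have d1 : q ^ 10 / q = q ^ 9 := by simpa using d 1 9 rfl
  have d0 : th (q ^ 10) (1 / q) = -(1 / q) * th (q ^ 10) q := by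
    have h1 : q ^ 10 / (1 / q) = q * q ^ 10 := by field_simp
    rw [th, th, h1, Po_succ hp (1 / q), Po_succ hp q, d1]
    have h2 : 1 / q * q ^ 10 = q ^ 9 := by field_simp
    rw [h2]
    field_simp
    ring
  rw [d0] at t
  simp only [th, d 5 5 rfl, d 4 6 rfl, d 2 8 rfl, d 6 4 rfl, d 8 2 rfl, d 3 7 rfl, d1] at t
  rw [pow_one]
  have hqq : q ^ 3 * (1 / q) = q ^ 2 := by field_simp
  linear_combination t - (Po (q^10) q * Po (q^10) (q^9))^2 * (Po (q^10) (q^2) * Po (q^10) (q^8))^2 * hqq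


lemma dsum_aux {r : ℝ} (h0 : 0 < r) (h1 : r < 1) :
    Summable fun n : ℕ => (n : ℝ) * r ^ (n - 1) / (1 - r) := by
  have h := (hasSum_coe_mul_geometric_of_norm_lt_one (r := r)
    (by rw [Real.norm_eq_abs, abs_of_pos h0]; exact h1)).summable
  refine ((h.mul_right (1 / r)).div_const (1 - r)).congr fun n => ?_
  rcases n with _ | n
  · simp
  · simp only [Nat.add_sub_cancel]; field_simp; ring

lemma glog_summable {x : ℝ} (h0 : 0 < x) (h1 : x < 1) :
    Summable fun n : ℕ => (chi n : ℝ) * Real.log (1 - x ^ n) := by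
  have h := Real.summable_log_one_add_of_summable
    (f := fun n : ℕ => -x ^ n) (summable_geometric_of_lt_one h0.le h1).neg
  refine Summable.of_norm_bounded h.norm fun n => ?_
  rw [norm_mul]
  have c1 : ‖(chi n : ℝ)‖ ≤ 1 := by
    rw [Real.norm_eq_abs]; exact_mod_cast chi_abs n
  rw [← sub_eq_add_neg]
  nlinarith [norm_nonneg (Real.log (1 - x ^ n))]

lemma glog_deriv {q : ℝ} (h0 : 0 < q) (h1 : q < 1) :
    HasDerivAt (fun x : ℝ => ∑' n : ℕ, (chi n : ℝ) * Real.log (1 - x ^ n))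
      (∑' n : ℕ, (chi n : ℝ) * (-(n * q ^ (n - 1)) / (1 - q ^ n))) q := by
  obtain ⟨r, hr, hr1⟩ := exists_between h1
  have r0 : 0 < r := h0.trans hr
  refine hasDerivAt_tsum_of_isPreconnected (t := Set.Ioo 0 r) (y₀ := q)
    (g' := fun n y => (chi n : ℝ) * (-(n * y ^ (n - 1)) / (1 - y ^ n)))
    (dsum_aux r0 hr1) isOpen_Ioo
    isPreconnected_Ioo ?_ ?_ ⟨h0, hr⟩ (glog_summable h0 h1) ⟨h0, hr⟩
  · rintro n y ⟨hy0, hyr⟩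
    rcases n with _ | n
    · simpa [chi] using hasDerivAt_const y (0:ℝ)
    · have : y ^ (n + 1) < 1 := pow_lt_one₀ hy0.le (hyr.trans hr1) (by omega)
      have h2 : HasDerivAt (fun x : ℝ => 1 - x ^ (n + 1)) (-(((n + 1 : ℕ) : ℝ) * y ^ (n + 1 - 1))) y :=
        (hasDerivAt_pow (n + 1) y).const_sub 1
      exact (h2.log (by linarith)).const_mul _
  · rintro n y ⟨hy0, hyr⟩
    rcases n with _ | n
    · simp
    · have hy : y ^ (n + 1) ≤ r := by
        calc y ^ (n + 1) ≤ y ^ 1 := pow_le_pow_of_le_one hy0.le (hyr.trans hr1).le (by omega)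
          _ ≤ r := by rw [pow_one]; exact hyr.le
      have c1 : ‖(chi (n + 1) : ℝ)‖ ≤ 1 := by
        rw [Real.norm_eq_abs]; exact_mod_cast chi_abs (n + 1)
      rw [norm_mul, norm_div, norm_neg, Real.norm_of_nonneg (r := 1 - y ^ (n + 1)) (by linarith),
        Real.norm_of_nonneg (r := ((n + 1 : ℕ) : ℝ) * y ^ (n + 1 - 1)) (by positivity)]
      have hr2 : 0 < 1 - r := by linarith
      have hnn : 0 ≤ ((n + 1 : ℕ) : ℝ) * y ^ (n + 1 - 1) / (1 - y ^ (n + 1)) :=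
        div_nonneg (by positivity) (by linarith)
      calc _ ≤ 1 * (((n + 1 : ℕ) : ℝ) * r ^ (n + 1 - 1) / (1 - r)) := by gcongr
        _ = _ := one_mul _

lemma chi_ten (j i : ℕ) : chi (10 * j + i) = chi i := by
  unfold chi; simp [Nat.add_mod]

lemma ramK_eq {x : ℝ} (h0 : 0 < x) (h1 : x < 1) :
    ramK x = x * Real.exp (∑' n : ℕ, (chi n : ℝ) * Real.log (1 - x ^ n)) := by
  unfold ramK
  congr 1
  have h := group_sum 10 (glog_summable h0 h1).hasSum
  have h2 := h.rexp
  rw [← h2.tprod_eq]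
  refine tprod_congr fun j => ?_
  have hp : ∀ i : ℕ, 0 < i → 0 < 1 - x ^ (10 * j + i) := fun i hi => by
    have : x ^ (10 * j + i) < 1 := pow_lt_one₀ h0.le h1 (by omega)
    linarith
  have c0 : chi 0 = 0 := rfl
  have c1 : chi 1 = 1 := rfl
  have c2 : chi 2 = 1 := rfl
  have c3 : chi 3 = -1 := rfl
  have c4 : chi 4 = -1 := rfl
  have c5 : chi 5 = 0 := rfl
  have c6 : chi 6 = -1 := rfl
  have c7 : chi 7 = -1 := rfl
  have c8 : chi 8 = 1 := rfl
  have c9 : chi 9 = 1 := rfl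
  simp only [Function.comp_apply, chi_ten]
  simp only [Fin.sum_univ_succ, Fin.val_zero, Fin.val_succ, Finset.univ_eq_empty, Finset.sum_empty]
  norm_num only [c0, c1, c2, c3, c4, c5, c6, c7, c8, c9, Int.cast_one, Int.cast_zero, Int.cast_neg, zero_mul, one_mul,
    Real.exp_add, neg_mul, Real.exp_neg, Real.exp_zero, Real.exp_log, hp]
  rw [div_eq_mul_inv]
  simp only [mul_inv]
  ring

lemma ramK_deriv {q : ℝ} (h0 : 0 < q) (h1 : q < 1) :
    HasDerivAt ramK (ramK q / q *
      (1 - ∑' n : ℕ, (chi n : ℝ) * (n * (q ^ n / (1 - q ^ n))))) q := by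
  have h := (hasDerivAt_id q).mul (glog_deriv h0 h1).exp
  have e : ramK =ᶠ[𝓝 q] (fun x => x) * (fun x => Real.exp (∑' n : ℕ, (chi n : ℝ) * Real.log (1 - x ^ n))) := by
    filter_upwards [Ioo_mem_nhds h0 h1] with x hx
    exact ramK_eq hx.1 hx.2
  refine (h.congr_of_eventuallyEq e).congr_deriv ?_
  rw [ramK_eq h0 h1]
  have : q * ∑' n : ℕ, (chi n : ℝ) * (-(n * q ^ (n - 1)) / (1 - q ^ n)) =
      - ∑' n : ℕ, (chi n : ℝ) * (n * (q ^ n / (1 - q ^ n))) := by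
    rw [← tsum_mul_left, ← tsum_neg]
    refine tsum_congr fun n => ?_
    rcases n with _ | n
    · simp
    · simp only [Nat.add_sub_cancel]; ring
  simp only [id]
  generalize (∑' n : ℕ, (chi n : ℝ) * (-(n * q ^ (n - 1)) / (1 - q ^ n))) = A at *
  generalize (∑' n : ℕ, (chi n : ℝ) * (n * (q ^ n / (1 - q ^ n)))) = B at *
  field_simp
  linear_combination this

lemma cast_tprod (f : ℕ → ℝ) :
    ((∏' n, f n : ℝ) : ℂ) = ∏' n, (f n : ℂ) :=
  Function.LeftInverse.map_tprod f (g := Complex.ofRealHom) (g' := Complex.re)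
    Complex.continuous_ofReal Complex.continuous_re (fun x => Complex.ofReal_re x)

lemma cast_E (q : ℝ) : ((eulerE q : ℝ) : ℂ) = Po q q := by
  rw [eulerE, cast_tprod, Po]
  refine tprod_congr fun n => ?_
  push_cast; ring

lemma cast_K {q : ℝ} (h0 : 0 < q) (h1 : q < 1) : ((ramK q : ℝ) : ℂ) =
    q * ((Po (q ^ 10) (q ^ 1) * Po (q ^ 10) (q ^ 2) * Po (q ^ 10) (q ^ 8) * Po (q ^ 10) (q ^ 9)) /
      (Po (q ^ 10) (q ^ 3) * Po (q ^ 10) (q ^ 4) * Po (q ^ 10) (q ^ 6) * Po (q ^ 10) (q ^ 7))) := by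
  have hq : ‖(q:ℂ)‖ < 1 := by rwa [Complex.norm_real, Real.norm_of_nonneg h0.le]
  have hp : ‖(q:ℂ) ^ 10‖ < 1 := by
    rw [norm_pow]; exact pow_lt_one₀ (norm_nonneg _) hq (by norm_num)
  have hn : ∀ a : ℕ, 0 < a → Po ((q:ℂ) ^ 10) ((q:ℂ) ^ a) ≠ 0 := fun a ha => Po_ne' hp (by
    rw [norm_pow]; exact pow_lt_one₀ (norm_nonneg _) hq (by omega))
  have P := fun a : ℕ => Po_hasProd hp ((q:ℂ) ^ a)
  have hd := ((((P 1).mul (P 2)).mul (P 8)).mul (P 9)).div₀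
    ((((P 3).mul (P 4)).mul (P 6)).mul (P 7)) (by simp [hn])
  rw [ramK, Complex.ofReal_mul, cast_tprod, ← hd.tprod_eq]
  congr 1
  refine tprod_congr fun n => ?_
  have e : ∀ a : ℕ, (q:ℂ) ^ a * (((q:ℂ) ^ 10) ^ n) = (q:ℂ) ^ (10 * n + a) := fun a => by
    rw [← pow_mul, ← pow_add, add_comm]
  simp only [e]
  push_cast
  rfl

lemma final_alg {q : ℂ} (hq0 : q ≠ 0) (hq : ‖q‖ < 1) {k S : ℂ}
    (hk : k = q * ((Po (q ^ 10) (q ^ 1) * Po (q ^ 10) (q ^ 2) * Po (q ^ 10) (q ^ 8) * Po (q ^ 10) (q ^ 9)) /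
      (Po (q ^ 10) (q ^ 3) * Po (q ^ 10) (q ^ 4) * Po (q ^ 10) (q ^ 6) * Po (q ^ 10) (q ^ 7))))
    (hS : S * Po (q ^ 10) (q ^ 10) ^ 2 =
      Po q q * Po (q ^ 2) (q ^ 2) ^ 2 * Po (q ^ 5) (q ^ 5) ^ 3) :
    1 - k ^ 2 ≠ 0 ∧ k * (k / q * S) / (1 - k ^ 2) ^ 2 =
      q * Po q q ^ 3 * Po (q ^ 10) (q ^ 10) ^ 8 / Po (q ^ 5) (q ^ 5) ^ 7 := by
  have hp : ∀ m : ℕ, 0 < m → ‖q ^ m‖ < 1 := fun m hm => by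
    rw [norm_pow]; exact pow_lt_one₀ (norm_nonneg _) hq (by omega)
  have hn : ∀ a : ℕ, 0 < a → Po (q ^ 10) (q ^ a) ≠ 0 := fun a ha =>
    Po_ne' (hp 10 (by norm_num)) (hp a ha)
  have hA := mainA hq0 hq
  have g1 := Po_group hq q 10
  have g2 := Po_group (hp 2 (by norm_num)) (q ^ 2) 5
  have g5 := Po_group (hp 5 (by norm_num)) (q ^ 5) 2
  simp only [Fin.prod_univ_succ, Fin.val_zero, Fin.val_succ, Finset.univ_eq_empty,
    Finset.prod_empty, ← pow_mul, ← pow_add, ← pow_succ'] at g1 g2 g5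
  norm_num only at g1 g2 g5
  rw [g1, g2, g5] at hS
  rw [g1, g5]
  have n1 := hn 1 (by norm_num)
  have n2 := hn 2 (by norm_num)
  have n3 := hn 3 (by norm_num)
  have n4 := hn 4 (by norm_num)
  have n5 := hn 5 (by norm_num)
  have n6 := hn 6 (by norm_num)
  have n7 := hn 7 (by norm_num)
  have n8 := hn 8 (by norm_num)
  have n9 := hn 9 (by norm_num)
  have n10 := hn 10 (by norm_num)
  simp only [pow_one] at *
  generalize Po (q ^ 10) q = t1 at *
  generalize Po (q ^ 10) (q ^ 2) = t2 at *
  generalize Po (q ^ 10) (q ^ 3) = t3 at *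
  generalize Po (q ^ 10) (q ^ 4) = t4 at *
  generalize Po (q ^ 10) (q ^ 5) = t5 at *
  generalize Po (q ^ 10) (q ^ 6) = t6 at *
  generalize Po (q ^ 10) (q ^ 7) = t7 at *
  generalize Po (q ^ 10) (q ^ 8) = t8 at *
  generalize Po (q ^ 10) (q ^ 9) = t9 at *
  generalize Po (q ^ 10) (q ^ 10) = t10 at *
  have h1k : 1 - k ^ 2 = t5 ^ 4 * (t2 * t4 * t6 * t8) / (t3 * t4 * t6 * t7) ^ 2 := by
    have hkk : k * (t3 * t4 * t6 * t7) = q * (t1 * t2 * t8 * t9) := by rw [hk]; field_simp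
    rw [eq_div_iff (by simp [*]), sub_mul, ← mul_pow, hkk]
    linear_combination -hA
  have hS2 : S = (t1 * t2 * t3 * t4 * t5 * t6 * t7 * t8 * t9 * t10) * (t2 * t4 * t6 * t8 * t10) ^ 2
      * (t5 * t10) ^ 3 / t10 ^ 2 := by
    rw [eq_div_iff (by simp [*]), hS]; ring
  refine ⟨by rw [h1k]; simp [*], ?_⟩
  rw [h1k, hS2, hk]
  field_simp

theorem stmt_12 (q : ℝ) (hq0 : 0 < q) (hq1 : q < 1) :
    HasDerivAt (fun x : ℝ => (1 / 4) * ((1 + ramK x ^ 2) / (1 - ramK x ^ 2)))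
      (q * eulerE q ^ 3 * eulerE (q ^ 10) ^ 8 / eulerE (q ^ 5) ^ 7) q := by
  have hq : ‖(q:ℂ)‖ < 1 := by rwa [Complex.norm_real, Real.norm_of_nonneg hq0.le]
  have hc0 : (q:ℂ) ≠ 0 := by exact_mod_cast hq0.ne'
  have hd := ramK_deriv hq0 hq1
  obtain ⟨f1, f2⟩ := final_alg hc0 hq (cast_K hq0 hq1) (mainB hc0 hq)
  have eS : (1 - ∑' n : ℕ, (chi n : ℂ) * (n * ((q:ℂ) ^ n / (1 - (q:ℂ) ^ n)))) =
      ((1 - ∑' n : ℕ, (chi n : ℝ) * (n * (q ^ n / (1 - q ^ n))) : ℝ) : ℂ) := by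
    rw [Complex.ofReal_sub, Complex.ofReal_tsum]
    push_cast
    rfl
  have e1 := cast_E q
  have e5 := cast_E (q ^ 5)
  have e10 := cast_E (q ^ 10)
  rw [Complex.ofReal_pow] at e5 e10
  rw [eS, ← e1, ← e5, ← e10] at f2
  generalize (1 - ∑' n : ℕ, (chi n : ℝ) * (n * (q ^ n / (1 - q ^ n))) : ℝ) = S at *
  have f1' : 1 - ramK q ^ 2 ≠ 0 := by exact_mod_cast f1
  have f2' : ramK q * (ramK q / q * S) / (1 - ramK q ^ 2) ^ 2 =
      q * eulerE q ^ 3 * eulerE (q ^ 10) ^ 8 / eulerE (q ^ 5) ^ 7 := by exact_mod_cast f2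
  have h := (((hd.pow 2).const_add 1).div ((hd.pow 2).const_sub 1) f1').const_mul (1 / 4)
  refine h.congr_deriv ?_
  rw [← f2']
  simp only [Pi.pow_apply]
  field_simp
  ring
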